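/- Let F₁, F₂ be two facets of K₁ whose intersection is exactly one vertex v of K₁ (i.e., F₁ ∩ F₂ = {v}), and let c₁, c₂ be their centres. If c₁, c₂ ∈ λK₁ + u for some λ > 0 and u ∈ ℝ³, then λ ≥ 2/3. -/

import Mathlib

open Pointwise

/-- The unit cross-polytope in ℝ³. -/
def K1 : Set (Fin 3 → ℝ) := {x | |x 0| + |x 1| + |x 2| ≤ 1}

/-- The six vertices of the unit cross-polytope. -/
def K1Vertices : Set (Fin 3 → ℝ) :=
  {![1, 0, 0], ![-1, 0, 0], ![0, 1, 0], ![0, -1, 0], ![0, 0, 1], ![0, 0, -1]}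

/-- The facet of `K1` determined by a sign vector `e` (each `e i` being `1` or `-1`). -/
def K1Facet (e : Fin 3 → ℝ) : Set (Fin 3 → ℝ) :=
  convexHull ℝ {![e 0, 0, 0], ![0, e 1, 0], ![0, 0, e 2]}

/-- The centre (centroid) of the facet determined by the sign vector `e`. -/
noncomputable def K1FacetCentre (e : Fin 3 → ℝ) : Fin 3 → ℝ :=
  (1 / 3 : ℝ) • (![e 0, 0, 0] + ![0, e 1, 0] + ![0, 0, e 2])

theorem single_mem_K1Facet (e : Fin 3 → ℝ) (i : Fin 3) : Pi.single i (e i) ∈ K1Facet e := by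
  refine subset_convexHull ℝ _ ?_
  have h0 : (Pi.single 0 (e 0) : Fin 3 → ℝ) = ![e 0, 0, 0] := by ext k; fin_cases k <;> simp
  have h1 : (Pi.single 1 (e 1) : Fin 3 → ℝ) = ![0, e 1, 0] := by ext k; fin_cases k <;> simp
  have h2 : (Pi.single 2 (e 2) : Fin 3 → ℝ) = ![0, 0, e 2] := by ext k; fin_cases k <;> simp
  fin_cases i
  · exact Or.inl h0
  · exact Or.inr (Or.inl h1)
  · exact Or.inr (Or.inr h2)

/-- Facets meeting in a single point share the sign of at most one coordinate. -/
theorem eq_of_K1Facet_inter_eq_singleton {e₁ e₂ v : Fin 3 → ℝ}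
    (hne : ∀ i, e₁ i ≠ 0) (hint : K1Facet e₁ ∩ K1Facet e₂ = {v}) {i j : Fin 3}
    (hi : e₁ i = e₂ i) (hj : e₁ j = e₂ j) : i = j := by
  have key : ∀ k, e₁ k = e₂ k → Pi.single k (e₁ k) = v := fun k hk =>
    hint.subset ⟨single_mem_K1Facet e₁ k, hk ▸ single_mem_K1Facet e₂ k⟩
  by_contra hij
  have h := congrFun ((key i hi).trans (key j hj).symm) i
  rw [Pi.single_eq_same, Pi.single_eq_of_ne hij] at h
  exact hne i h

theorem abs_sub_add_le_of_mem_vadd_smul_K1 {lam : ℝ} (hlam : 0 < lam) {u x : Fin 3 → ℝ}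
    (hx : x ∈ u +ᵥ lam • K1) : |x 0 - u 0| + |x 1 - u 1| + |x 2 - u 2| ≤ lam := by
  obtain ⟨_, ⟨y, hy, rfl⟩, rfl⟩ := hx
  have hy' : |y 0| + |y 1| + |y 2| ≤ 1 := hy
  simp only [vadd_eq_add, Pi.add_apply, Pi.smul_apply, smul_eq_mul, add_sub_cancel_left, abs_mul,
    abs_of_pos hlam]
  nlinarith

theorem K1FacetCentre_apply (e : Fin 3 → ℝ) (i : Fin 3) : K1FacetCentre e i = e i / 3 := by
  fin_cases i <;> simp [K1FacetCentre] <;> ring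

/-- If `λ • K1 + u` contains the centres of two facets of `K1` whose intersection is exactly
one vertex `v` of `K1`, then `λ ≥ 2/3`. -/
theorem ratio_ge_two_thirds_of_two_centres
    (e₁ e₂ : Fin 3 → ℝ)
    (he₁ : ∀ i, e₁ i = 1 ∨ e₁ i = -1) (he₂ : ∀ i, e₂ i = 1 ∨ e₂ i = -1)
    (v : Fin 3 → ℝ) (hv : v ∈ K1Vertices)
    (hint : K1Facet e₁ ∩ K1Facet e₂ = {v})
    (lam : ℝ) (hlam : 0 < lam) (u : Fin 3 → ℝ)
    (hc₁ : K1FacetCentre e₁ ∈ u +ᵥ lam • K1)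
    (hc₂ : K1FacetCentre e₂ ∈ u +ᵥ lam • K1) :
    2 / 3 ≤ lam := by
  have hne : ∀ i, e₁ i ≠ 0 := fun i => by rcases he₁ i with h | h <;> rw [h] <;> norm_num
  have h01 : ¬(e₁ 0 = e₂ 0 ∧ e₁ 1 = e₂ 1) := fun h =>
    absurd (eq_of_K1Facet_inter_eq_singleton hne hint h.1 h.2) (by decide)
  have h02 : ¬(e₁ 0 = e₂ 0 ∧ e₁ 2 = e₂ 2) := fun h =>
    absurd (eq_of_K1Facet_inter_eq_singleton hne hint h.1 h.2) (by decide)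
  have h12 : ¬(e₁ 1 = e₂ 1 ∧ e₁ 2 = e₂ 2) := fun h =>
    absurd (eq_of_K1Facet_inter_eq_singleton hne hint h.1 h.2) (by decide)
  have b₁ := abs_sub_add_le_of_mem_vadd_smul_K1 hlam hc₁
  have b₂ := abs_sub_add_le_of_mem_vadd_smul_K1 hlam hc₂
  simp only [K1FacetCentre_apply] at b₁ b₂
  have tri : ∀ i, |e₁ i - e₂ i| / 3 ≤ |e₁ i / 3 - u i| + |e₂ i / 3 - u i| := fun i => by
    have h := abs_sub_le (e₁ i / 3) (u i) (e₂ i / 3)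
    rwa [← sub_div, abs_div, abs_of_pos (three_pos : (0 : ℝ) < 3), abs_sub_comm (u i)] at h
  have dist_eq : ∀ i, e₁ i = e₂ i ∨ |e₁ i - e₂ i| = 2 := fun i => by
    rcases he₁ i with h | h <;> rcases he₂ i with h' | h' <;> rw [h, h'] <;> norm_num
  have t0 := tri 0
  have t1 := tri 1
  have t2 := tri 2
  have n0 := abs_nonneg (e₁ 0 - e₂ 0)
  have n1 := abs_nonneg (e₁ 1 - e₂ 1)
  have n2 := abs_nonneg (e₁ 2 - e₂ 2)
  rcases dist_eq 0 with d0 | d0 <;> rcases dist_eq 1 with d1 | d1 <;>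
    rcases dist_eq 2 with d2 | d2 <;>
    first
    | linarith
    | simp_all
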